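/- Let μ be a probability measure on (0,∞) with distribution function F such that 1 − F is positive and slowly varying at infinity, let 0 < a < b < ∞, let (λ_i)_{i≥1} be any sequence in [a,b], let μ_i be the pushforward of μ under x ↦ x/λ_i, and let ν_Λ = δ_0 + Σ_{n=1}^∞ μ_1 * ⋯ * μ_n be the associated renewal measure with U_Λ(t) = ν_Λ([0,t]). Then for every z > 0, (∫_{[0,∞)} e^{−z·s/t} dν_Λ(s)) / U_Λ(t) → 1 as t → ∞; i.e., the normalized renewal measures B ↦ ν_Λ(t·B)/U_Λ(t) converge to the point mass at 0 in the sense of Laplace transforms. -/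

import Mathlib

open MeasureTheory ProbabilityTheory Filter Set Topology ENNReal

/-- Partial convolutions `μ_1 * μ_2 * ⋯ * μ_n` of a sequence of measures,
with the empty product `δ_0`. -/
noncomputable def partialConv (μs : ℕ → MeasureTheory.Measure ℝ) :
    ℕ → MeasureTheory.Measure ℝ
  | 0 => MeasureTheory.Measure.dirac 0
  | n + 1 => MeasureTheory.Measure.conv (partialConv μs n) (μs (n + 1))

/-!
For a probability measure `μ` on `[0, ∞)` with tail `G`, integration by parts writes `1 - φ(w)`,
where `φ` is the Laplace transform, as `∫ G(s) w e^{-ws} ds`. As `t * G(t) → ∞`, the part of this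
integral over a bounded range of `s`, which is `O(1 / t)` at `w = 1 / t`, is negligible, so
`1 - φ(1 / t)` is slowly varying along with `G`. Convolution turns the transform of the renewal
measure into a sum of products of the values `φ(w / λ_i)`; comparison with geometric series
squeezes it at `w = 1 / t` between `(1 - φ(1 / (a t)))⁻¹` and `(1 - φ(1 / (b t)))⁻¹`, hence it is
slowly varying too. Finally `U(t) ≤ e^{wt} φ_ν(w)` and `φ_ν(2w) ≤ U(t) + e^{-wt} φ_ν(w)`, taken at
`w = y / t` with `y → 0` and `y → ∞` respectively, pin `U(t)` to `φ_ν(z / t)`.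
-/

/-- Slow variation at infinity: `L (c * t) / L t → 1` as `t → ∞` for every `c > 0`. The values lie
in `ℝ≥0∞` so that the notion applies to tails and Laplace transforms of measures alike; as
`0 / 0 = ∞ / ∞ = 0` there, it forces `L` to be eventually positive and finite. -/
def IsSlowlyVarying (L : ℝ → ℝ≥0∞) : Prop :=
  ∀ c : ℝ, 0 < c → Tendsto (fun t ↦ L (c * t) / L t) atTop (𝓝 1)

/-- The Laplace transform `w ↦ ∫ e^{-wx} dμ(x)` of a measure on the line, as a lower Lebesgue
integral because the renewal measure is infinite. -/
noncomputable def laplaceTransform (μ : Measure ℝ) (w : ℝ) : ℝ≥0∞ :=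
  ∫⁻ x, ENNReal.ofReal (Real.exp (-(w * x))) ∂μ

/-- The renewal measure `∑_{n ≥ 0} μ_1 * ⋯ * μ_n`, whose term at `n = 0` is `δ_0`. -/
noncomputable def renewalMeasure (μs : ℕ → Measure ℝ) : Measure ℝ :=
  Measure.sum (partialConv μs)

section SlowVariation

lemma tendsto_div_one_swap {α : Type*} {l : Filter α} {u v : α → ℝ≥0∞}
    (h : Tendsto (fun x ↦ u x / v x) l (𝓝 1)) : Tendsto (fun x ↦ v x / u x) l (𝓝 1) := by
  have hinv := tendsto_inv_iff.2 h
  rw [inv_one] at hinv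
  refine hinv.congr' ?_
  filter_upwards [h.eventually_ne one_ne_zero] with x hx
  obtain ⟨hu, hv⟩ := ENNReal.div_ne_zero.1 hx
  exact ENNReal.inv_div (.inl hv) (.inr hu)

lemma isSlowlyVarying_ofReal {G : ℝ → ℝ} (hpos : ∀ t, 0 < G t)
    (hG : ∀ c : ℝ, 0 < c → Tendsto (fun t ↦ G (c * t) / G t) atTop (𝓝 1)) :
    IsSlowlyVarying fun t ↦ ENNReal.ofReal (G t) := by
  intro c hc
  simpa only [ENNReal.ofReal_one, ENNReal.ofReal_div_of_pos (hpos _)] using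
    ENNReal.tendsto_ofReal (hG c hc)

variable {L M : ℝ → ℝ≥0∞} {b c : ℝ}

namespace IsSlowlyVarying

lemma tendsto_comp_mul_div_comp_mul (hL : IsSlowlyVarying L) (hb : 0 < b) (hc : 0 < c) :
    Tendsto (fun t ↦ L (b * t) / L (c * t)) atTop (𝓝 1) := by
  refine ((hL (b / c) (div_pos hb hc)).comp (tendsto_id.const_mul_atTop hc)).congr fun t ↦ ?_
  simp only [Function.comp_apply, id_eq, ← mul_assoc, div_mul_cancel₀ b hc.ne']

lemma eventually_ne_zero (hL : IsSlowlyVarying L) : ∀ᶠ t in atTop, L t ≠ 0 := by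
  filter_upwards [(hL 1 one_pos).eventually_ne one_ne_zero] with t ht
  simpa only [one_mul] using (ENNReal.div_ne_zero.1 ht).1

lemma eventually_le_mul (hL : IsSlowlyVarying L) (hc : 0 < c) {r : ℝ≥0∞} (hr : 1 < r) :
    ∀ᶠ t in atTop, L t ≤ r * L (c * t) := by
  filter_upwards [(tendsto_div_one_swap (hL c hc)).eventually_lt_const hr,
    (hL c hc).eventually_ne one_ne_zero] with t hlt hne
  exact (ENNReal.div_le_iff_le_mul (.inl (ENNReal.div_ne_zero.1 hne).1) (.inr hlt.ne_bot)).1 hlt.le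

lemma inv (hL : IsSlowlyVarying L) : IsSlowlyVarying fun t ↦ (L t)⁻¹ := by
  intro c hc
  refine (tendsto_div_one_swap (hL c hc)).congr fun t ↦ ?_
  rw [div_eq_mul_inv, div_eq_mul_inv, inv_inv, mul_comm]

lemma of_le_of_le (hL : IsSlowlyVarying L) (hb : 0 < b) (hc : 0 < c)
    (hlower : ∀ᶠ t in atTop, L (b * t) ≤ M t) (hupper : ∀ᶠ t in atTop, M t ≤ L (c * t)) :
    IsSlowlyVarying M := by
  intro d hd
  have hmul : Tendsto (d * ·) atTop atTop := tendsto_id.const_mul_atTop hd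
  refine tendsto_of_tendsto_of_tendsto_of_le_of_le'
    (hL.tendsto_comp_mul_div_comp_mul (mul_pos hb hd) hc)
    (hL.tendsto_comp_mul_div_comp_mul (mul_pos hc hd) hb) ?_ ?_
  · filter_upwards [hmul.eventually hlower, hupper] with t hnum hden
    rw [mul_assoc]
    exact ENNReal.div_le_div hnum hden
  · filter_upwards [hmul.eventually hupper, hlower] with t hnum hden
    rw [mul_assoc]
    exact ENNReal.div_le_div hnum hden

-- Multiplying the argument by `4` eventually costs at most a factor `2`, so `t * L t` grows
-- without bound along `t = 4 ^ n * t₀`.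
lemma exists_le_two_pow_mul (hL : IsSlowlyVarying L) :
    ∃ t₀ > 0, L t₀ ≠ 0 ∧ ∀ n : ℕ, L t₀ ≤ 2 ^ n * L (4 ^ n * t₀) := by
  obtain ⟨T, hT⟩ := eventually_atTop.1 <|
    (hL.eventually_le_mul four_pos ENNReal.one_lt_two).and
      (hL.eventually_ne_zero.and (eventually_gt_atTop 0))
  obtain ⟨-, hne, hpos⟩ := hT T le_rfl
  refine ⟨T, hpos, hne, fun n ↦ ?_⟩
  induction n with
  | zero => simp
  | succ n ih =>
    have hge : T ≤ 4 ^ n * T := le_mul_of_one_le_left hpos.le (one_le_pow₀ (by norm_num))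
    calc L T ≤ 2 ^ n * L (4 ^ n * T) := ih
      _ ≤ 2 ^ n * (2 * L (4 * (4 ^ n * T))) := by gcongr; exact (hT _ hge).1
      _ = 2 ^ (n + 1) * L (4 ^ (n + 1) * T) := by rw [pow_succ', pow_succ' (4 : ℝ)]; ring_nf

lemma exists_forall_two_pow_mul_le (hL : IsSlowlyVarying L) (hanti : AntitoneOn L (Ioi 0)) :
    ∃ t₀ > 0, L t₀ ≠ 0 ∧ ∀ n : ℕ, ∀ t ∈ Icc (4 ^ n * t₀) (4 ^ (n + 1) * t₀),
      2 ^ n * (ENNReal.ofReal t₀ * L t₀) ≤ 2 * (ENNReal.ofReal t * L t) := by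
  obtain ⟨t₀, ht₀, hne, hpow⟩ := hL.exists_le_two_pow_mul
  refine ⟨t₀, ht₀, hne, fun n t ⟨hnt, htn⟩ ↦ ?_⟩
  have ht : 0 < t := lt_of_lt_of_le (by positivity) hnt
  have hscale : (4 : ℝ≥0∞) ^ n * ENNReal.ofReal t₀ ≤ ENNReal.ofReal t := by
    simpa [ENNReal.ofReal_mul, ENNReal.ofReal_pow] using ENNReal.ofReal_le_ofReal hnt
  have hL₀ : L t₀ ≤ 2 ^ (n + 1) * L t :=
    (hpow (n + 1)).trans (by gcongr; exact hanti ht (ht.trans_le htn) htn)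
  refine (ENNReal.mul_le_mul_iff_right (a := 2 ^ n) (by simp) (by finiteness)).1 ?_
  calc 2 ^ n * (2 ^ n * (ENNReal.ofReal t₀ * L t₀))
      = (4 ^ n * ENNReal.ofReal t₀) * L t₀ := by
        rw [show (4 : ℝ≥0∞) = 2 * 2 by norm_num, mul_pow]; ring
    _ ≤ ENNReal.ofReal t * (2 ^ (n + 1) * L t) := by gcongr
    _ = 2 ^ n * (2 * (ENNReal.ofReal t * L t)) := by ring

lemma tendsto_ofReal_mul_nhds_top (hL : IsSlowlyVarying L) (hanti : AntitoneOn L (Ioi 0)) :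
    Tendsto (fun t ↦ ENNReal.ofReal t * L t) atTop (𝓝 ⊤) := by
  obtain ⟨t₀, ht₀, hne, hdyadic⟩ := hL.exists_forall_two_pow_mul_le hanti
  refine ENNReal.tendsto_nhds_top fun K ↦ ?_
  obtain ⟨N, hN⟩ := ENNReal.exists_nat_mul_gt
    (mul_ne_zero (ENNReal.ofReal_pos.2 ht₀).ne' hne) (b := 2 * K) (by finiteness)
  filter_upwards [eventually_ge_atTop (4 ^ N * t₀)] with t ht
  have hone : 1 ≤ t / t₀ :=
    (one_le_pow₀ (by norm_num)).trans ((le_div_iff₀ ht₀).2 ht)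
  obtain ⟨n, hnt, htn⟩ := exists_nat_pow_near hone (show (1 : ℝ) < 4 by norm_num)
  have hNn : N ≤ n := Nat.lt_succ_iff.1 <|
    (pow_lt_pow_iff_right₀ (by norm_num)).1 (((le_div_iff₀ ht₀).2 ht).trans_lt htn)
  refine (ENNReal.mul_lt_mul_iff_right two_ne_zero ofNat_ne_top).1 (hN.trans_le ?_)
  calc (N : ℝ≥0∞) * (ENNReal.ofReal t₀ * L t₀) ≤ 2 ^ n * (ENNReal.ofReal t₀ * L t₀) := by
        gcongr
        exact_mod_cast hNn.trans Nat.lt_two_pow_self.le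
    _ ≤ 2 * (ENNReal.ofReal t * L t) :=
        hdyadic n t ⟨(le_div_iff₀ ht₀).1 hnt, ((div_lt_iff₀ ht₀).1 htn).le⟩

end IsSlowlyVarying

lemma isSlowlyVarying_of_antitoneOn (hanti : AntitoneOn L (Ioi 0))
    (hzero : ∀ᶠ t in atTop, L t ≠ 0) (htop : ∀ᶠ t in atTop, L t ≠ ⊤)
    (hle : ∀ c : ℝ, 1 ≤ c → ∀ r : ℝ≥0∞, 1 < r → ∀ᶠ t in atTop, L t ≤ r * L (c * t)) :
    IsSlowlyVarying L := by
  have hone_le (c : ℝ) (hc : 1 ≤ c) : Tendsto (fun t ↦ L (c * t) / L t) atTop (𝓝 1) := by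
    refine tendsto_order.2 ⟨fun p hp ↦ ?_, fun p hp ↦ ?_⟩
    · obtain ⟨q, hpq, hq⟩ := exists_between hp
      filter_upwards [hle c hc q⁻¹ (ENNReal.one_lt_inv.2 hq), hzero, htop] with t ht h0 h1
      refine hpq.trans_le ((ENNReal.le_div_iff_mul_le (.inl h0) (.inl h1)).2 ?_)
      rwa [mul_comm q⁻¹, ← div_eq_mul_inv, ENNReal.le_div_iff_mul_le (.inl hpq.ne_bot)
        (.inl hq.ne_top), mul_comm] at ht
    · filter_upwards [eventually_gt_atTop 0] with t ht
      have hct : t ≤ c * t := le_mul_of_one_le_left ht.le hc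
      exact (ENNReal.div_le_of_le_mul (by simpa using hanti ht (ht.trans_le hct) hct)).trans_lt hp
  intro c hc
  obtain hc1 | hc1 := le_total 1 c
  · exact hone_le c hc1
  · refine tendsto_div_one_swap (((hone_le c⁻¹ ((one_le_inv₀ hc).2 hc1)).comp
      (tendsto_id.const_mul_atTop hc)).congr fun t ↦ ?_)
    simp only [Function.comp_apply, id_eq, inv_mul_cancel_left₀ hc.ne']

end SlowVariation

section LaplaceTransform

variable {μ ν : Measure ℝ} {t w : ℝ}

lemma laplaceTransform_dirac_zero (w : ℝ) : laplaceTransform (Measure.dirac 0) w = 1 := by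
  simp [laplaceTransform]

lemma laplaceTransform_conv [SFinite ν] (w : ℝ) :
    laplaceTransform (μ.conv ν) w = laplaceTransform μ w * laplaceTransform ν w := by
  simp only [laplaceTransform]
  rw [Measure.lintegral_conv_eq_lintegral_sum (by fun_prop),
    ← lintegral_prod_mul (by fun_prop) (by fun_prop)]
  simp only [mul_add, neg_add, Real.exp_add, ENNReal.ofReal_mul (Real.exp_nonneg _)]

lemma laplaceTransform_map_div (μ : Measure ℝ) (c w : ℝ) :
    laplaceTransform (μ.map (· / c)) w = laplaceTransform μ (w / c) := by
  simp only [laplaceTransform]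
  rw [lintegral_map (by fun_prop) (by fun_prop)]
  simp only [mul_div_assoc', div_mul_eq_mul_div]

lemma laplaceTransform_sum {ι : Type*} (μs : ι → Measure ℝ) (w : ℝ) :
    laplaceTransform (Measure.sum μs) w = ∑' i, laplaceTransform (μs i) w :=
  lintegral_sum_measure _ _

lemma ae_nonneg_map_div (hμ : ∀ᵐ x ∂μ, 0 ≤ x) {c : ℝ} (hc : 0 ≤ c) :
    ∀ᵐ x ∂μ.map (· / c), 0 ≤ x := by
  rw [ae_map_iff (by fun_prop) measurableSet_Ici]
  exact hμ.mono fun x hx ↦ div_nonneg hx hc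

lemma antitone_laplaceTransform (hμ : ∀ᵐ x ∂μ, 0 ≤ x) : Antitone (laplaceTransform μ) := by
  intro v w hvw
  refine lintegral_mono_ae ?_
  filter_upwards [hμ] with x hx
  gcongr

lemma antitoneOn_one_sub_laplaceTransform_inv (hμ : ∀ᵐ x ∂μ, 0 ≤ x) :
    AntitoneOn (fun t ↦ 1 - laplaceTransform μ t⁻¹) (Ioi 0) := by
  intro s hs t _ hst
  exact tsub_le_tsub_left (antitone_laplaceTransform hμ (inv_anti₀ hs hst)) 1

lemma one_sub_laplaceTransform_eq_lintegral [IsProbabilityMeasure μ] (hμ : ∀ᵐ x ∂μ, 0 ≤ x)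
    (hw : 0 ≤ w) :
    1 - laplaceTransform μ w = ∫⁻ x, ENNReal.ofReal (1 - Real.exp (-(w * x))) ∂μ := by
  have hle : ∀ᵐ x ∂μ, ENNReal.ofReal (Real.exp (-(w * x))) ≤ 1 := by
    filter_upwards [hμ] with x hx
    rw [ENNReal.ofReal_le_one, Real.exp_le_one_iff]
    exact neg_nonpos.2 (mul_nonneg hw hx)
  have hfin : laplaceTransform μ w ≠ ⊤ :=
    ((lintegral_mono_ae hle).trans_lt (by simp)).ne
  calc 1 - laplaceTransform μ w
      = ∫⁻ x, (1 - ENNReal.ofReal (Real.exp (-(w * x)))) ∂μ := by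
        rw [lintegral_sub (by fun_prop) hfin hle, lintegral_one, measure_univ, laplaceTransform]
    _ = ∫⁻ x, ENNReal.ofReal (1 - Real.exp (-(w * x))) ∂μ := by
        simp only [ENNReal.ofReal_sub _ (Real.exp_nonneg _), ENNReal.ofReal_one]

lemma one_sub_laplaceTransform_eq_lintegral_tail [IsProbabilityMeasure μ]
    (hμ : ∀ᵐ x ∂μ, 0 ≤ x) (hw : 0 ≤ w) :
    1 - laplaceTransform μ w =
      ∫⁻ s in Ioi 0, μ (Ioi s) * ENNReal.ofReal (w * Real.exp (-(w * s))) := by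
  have hprim (x : ℝ) : ∫ s in 0..x, w * Real.exp (-(w * s)) = 1 - Real.exp (-(w * x)) := by
    have hderiv (s : ℝ) :
        HasDerivAt (fun s ↦ -Real.exp (-(w * s))) (w * Real.exp (-(w * s))) s := by
      simpa [mul_comm] using (((hasDerivAt_id s).const_mul w).fun_neg.exp).fun_neg
    rw [intervalIntegral.integral_eq_sub_of_hasDerivAt (fun s _ ↦ hderiv s)
      (Continuous.intervalIntegrable (by fun_prop) _ _)]
    simp only [mul_zero, neg_zero, Real.exp_zero]
    ring
  rw [one_sub_laplaceTransform_eq_lintegral hμ hw]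
  simp only [← hprim]
  exact lintegral_comp_eq_lintegral_meas_lt_mul μ hμ aemeasurable_id
    (fun _ _ ↦ Continuous.intervalIntegrable (by fun_prop) _ _)
    (ae_of_all _ fun _ ↦ by positivity)

lemma mul_measure_Ioi_le_one_sub_laplaceTransform_inv [IsProbabilityMeasure μ]
    (hμ : ∀ᵐ x ∂μ, 0 ≤ x) (ht : 0 < t) :
    ENNReal.ofReal (1 - Real.exp (-1)) * μ (Ioi t) ≤ 1 - laplaceTransform μ t⁻¹ := by
  rw [one_sub_laplaceTransform_eq_lintegral hμ (inv_nonneg.2 ht.le)]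
  refine le_trans ?_ 
    (mul_meas_ge_le_lintegral (by fun_prop) (ENNReal.ofReal (1 - Real.exp (-1))))
  gcongr
  intro x hx
  have hone : 1 ≤ t⁻¹ * x := by
    rw [inv_mul_eq_div]
    exact (one_le_div ht).2 (le_of_lt hx)
  change ENNReal.ofReal _ ≤ ENNReal.ofReal _
  gcongr

lemma one_sub_laplaceTransform_le_of_tail_le [IsProbabilityMeasure μ] [IsProbabilityMeasure ν]
    (hμ : ∀ᵐ x ∂μ, 0 ≤ x) (hν : ∀ᵐ x ∂ν, 0 ≤ x) (hw : 0 ≤ w) {r : ℝ≥0∞} {T : ℝ}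
    (hle : ∀ s, T ≤ s → μ (Ioi s) ≤ r * ν (Ioi s)) :
    1 - laplaceTransform μ w ≤ r * (1 - laplaceTransform ν w) + ENNReal.ofReal (w * T) := by
  set density : ℝ → ℝ≥0∞ := fun s ↦ ENNReal.ofReal (w * Real.exp (-(w * s)))
  have hdensity : Measurable density := by fun_prop
  have htail : Measurable fun s ↦ ν (Ioi s) :=
    Antitone.measurable fun _ _ hst ↦ measure_mono (Ioi_subset_Ioi hst)
  have hprod : Measurable fun s ↦ ν (Ioi s) * density s := htail.mul hdensity
  have hpointwise (s : ℝ) (hs : 0 < s) : μ (Ioi s) * density s ≤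
      r * (ν (Ioi s) * density s) + (Iio T).indicator (fun _ ↦ ENNReal.ofReal w) s := by
    obtain hsT | hTs := lt_or_ge s T
    · refine le_add_left ?_
      rw [indicator_of_mem (mem_Iio.2 hsT)]
      refine mul_le_of_le_one_of_le prob_le_one (ENNReal.ofReal_le_ofReal ?_)
      exact mul_le_of_le_one_right hw (Real.exp_le_one_iff.2 (neg_nonpos.2 (by positivity)))
    · refine le_add_right ?_
      rw [← mul_assoc]
      gcongr
      exact hle s hTs
  rw [one_sub_laplaceTransform_eq_lintegral_tail hμ hw,
    one_sub_laplaceTransform_eq_lintegral_tail hν hw]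
  calc ∫⁻ s in Ioi 0, μ (Ioi s) * density s
      ≤ ∫⁻ s in Ioi 0, (r * (ν (Ioi s) * density s)
          + (Iio T).indicator (fun _ ↦ ENNReal.ofReal w) s) :=
        setLIntegral_mono' measurableSet_Ioi hpointwise
    _ = r * (∫⁻ s in Ioi 0, ν (Ioi s) * density s) + ENNReal.ofReal (w * T) := by
        rw [lintegral_add_left (hprod.const_mul r), lintegral_const_mul _ hprod,
          lintegral_indicator_const measurableSet_Iio, Measure.restrict_apply measurableSet_Iio,
          inter_comm, Ioi_inter_Iio, Real.volume_Ioo, sub_zero, ENNReal.ofReal_mul hw]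

lemma tendsto_ofReal_mul_one_sub_laplaceTransform_inv_nhds_top [IsProbabilityMeasure μ]
    (hμ : ∀ᵐ x ∂μ, 0 ≤ x) (hslow : IsSlowlyVarying fun t ↦ μ (Ioi t)) :
    Tendsto (fun t ↦ ENNReal.ofReal t * (1 - laplaceTransform μ t⁻¹)) atTop (𝓝 ⊤) := by
  have hconst : ENNReal.ofReal (1 - Real.exp (-1)) ≠ 0 := by simp
  have htail : Tendsto (fun t ↦ ENNReal.ofReal t * μ (Ioi t)) atTop (𝓝 ⊤) :=
    hslow.tendsto_ofReal_mul_nhds_top fun _ _ _ _ hst ↦ measure_mono (Ioi_subset_Ioi hst)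
  have hlower := ENNReal.Tendsto.const_mul htail (.inl ENNReal.top_ne_zero)
    (a := ENNReal.ofReal (1 - Real.exp (-1)))
  rw [ENNReal.mul_top hconst] at hlower
  refine tendsto_nhds_top_mono hlower ?_
  filter_upwards [eventually_gt_atTop 0] with t ht
  rw [mul_left_comm]
  gcongr
  exact mul_measure_Ioi_le_one_sub_laplaceTransform_inv hμ ht

lemma eventually_ofReal_inv_mul_le_mul_one_sub_laplaceTransform_inv [IsProbabilityMeasure μ]
    (hμ : ∀ᵐ x ∂μ, 0 ≤ x) (hslow : IsSlowlyVarying fun t ↦ μ (Ioi t)) (T : ℝ) {ε : ℝ≥0∞}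
    (hε : ε ≠ 0) :
    ∀ᶠ t in atTop, ENNReal.ofReal (t⁻¹ * T) ≤ ε * (1 - laplaceTransform μ t⁻¹) := by
  have htop := ENNReal.Tendsto.const_mul
    (tendsto_ofReal_mul_one_sub_laplaceTransform_inv_nhds_top hμ hslow) (.inl ENNReal.top_ne_zero)
    (a := ε)
  rw [ENNReal.mul_top hε] at htop
  filter_upwards [htop.eventually_const_lt (ENNReal.ofReal_lt_top (r := T)),
    eventually_gt_atTop 0] with t hlt ht
  rw [ENNReal.ofReal_mul (inv_nonneg.2 ht.le), ENNReal.ofReal_inv_of_pos ht,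
    ENNReal.inv_mul_le_iff (ENNReal.ofReal_pos.2 ht).ne' ENNReal.ofReal_ne_top, mul_left_comm]
  exact hlt.le

lemma eventually_one_sub_laplaceTransform_inv_le_mul [IsProbabilityMeasure μ]
    (hμ : ∀ᵐ x ∂μ, 0 ≤ x) (hslow : IsSlowlyVarying fun t ↦ μ (Ioi t)) {c : ℝ} (hc : 0 < c)
    {r : ℝ≥0∞} (hr : 1 < r) :
    ∀ᶠ t in atTop, 1 - laplaceTransform μ t⁻¹ ≤ r * (1 - laplaceTransform μ (c * t)⁻¹) := by
  obtain ⟨q, hq, hqr⟩ := exists_between hr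
  obtain ⟨T, hT⟩ := eventually_atTop.1 (hslow.eventually_le_mul hc hq)
  have : IsProbabilityMeasure (μ.map (· / c)) := Measure.isProbabilityMeasure_map (by fun_prop)
  have hmap : ∀ᵐ x ∂μ.map (· / c), 0 ≤ x := ae_nonneg_map_div hμ hc.le
  have htail (s : ℝ) (hs : T ≤ s) : μ (Ioi s) ≤ q * μ.map (· / c) (Ioi s) := by
    have hpre : (· / c) ⁻¹' Ioi s = Ioi (c * s) := by
      ext x; simp [lt_div_iff₀ hc, mul_comm]
    rw [Measure.map_apply (by fun_prop) measurableSet_Ioi, hpre]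
    exact hT s hs
  filter_upwards [eventually_gt_atTop 0, (tendsto_id.const_mul_atTop hc).eventually
    (eventually_ofReal_inv_mul_le_mul_one_sub_laplaceTransform_inv hμ hslow (c * T)
      (tsub_pos_of_lt hqr).ne')] with t ht herror
  have herr : (c * t)⁻¹ * (c * T) = t⁻¹ * T := by field_simp
  rw [id_eq, herr] at herror
  calc 1 - laplaceTransform μ t⁻¹
      ≤ q * (1 - laplaceTransform (μ.map (· / c)) t⁻¹) + ENNReal.ofReal (t⁻¹ * T) :=
        one_sub_laplaceTransform_le_of_tail_le hμ hmap (inv_nonneg.2 ht.le) htail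
    _ = q * (1 - laplaceTransform μ (c * t)⁻¹) + ENNReal.ofReal (t⁻¹ * T) := by
        rw [laplaceTransform_map_div, mul_inv, mul_comm, div_eq_mul_inv, mul_comm c⁻¹, mul_comm q]
    _ ≤ q * (1 - laplaceTransform μ (c * t)⁻¹) + (r - q) * (1 - laplaceTransform μ (c * t)⁻¹) := by
        gcongr
    _ = r * (1 - laplaceTransform μ (c * t)⁻¹) := by
        rw [← add_mul, add_tsub_cancel_of_le hqr.le]

theorem isSlowlyVarying_one_sub_laplaceTransform_inv [IsProbabilityMeasure μ]
    (hμ : ∀ᵐ x ∂μ, 0 ≤ x) (hslow : IsSlowlyVarying fun t ↦ μ (Ioi t)) :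
    IsSlowlyVarying fun t ↦ 1 - laplaceTransform μ t⁻¹ := by
  refine isSlowlyVarying_of_antitoneOn (antitoneOn_one_sub_laplaceTransform_inv hμ) ?_
    (.of_forall fun t ↦ (tsub_le_self.trans_lt ENNReal.one_lt_top).ne)
    fun c hc r hr ↦ eventually_one_sub_laplaceTransform_inv_le_mul hμ hslow (one_pos.trans_le hc) hr
  filter_upwards [(tendsto_ofReal_mul_one_sub_laplaceTransform_inv_nhds_top hμ hslow).eventually_ne
    ENNReal.top_ne_zero] with t ht
  exact right_ne_zero_of_mul ht

end LaplaceTransform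

section Tauberian

variable {ν : Measure ℝ}

lemma measure_Icc_le_exp_mul_laplaceTransform (ν : Measure ℝ) {w : ℝ} (hw : 0 ≤ w) (t : ℝ) :
    ν (Icc 0 t) ≤ ENNReal.ofReal (Real.exp (w * t)) * laplaceTransform ν w := by
  rw [laplaceTransform, ← lintegral_const_mul _ (by fun_prop),
    ← lintegral_indicator_one measurableSet_Icc]
  refine lintegral_mono (indicator_le fun s hs ↦ ?_)
  rw [← ENNReal.ofReal_mul (Real.exp_nonneg _), ← Real.exp_add, Pi.one_apply,
    ENNReal.one_le_ofReal, Real.one_le_exp_iff, ← sub_eq_add_neg, sub_nonneg]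
  exact mul_le_mul_of_nonneg_left hs.2 hw

lemma laplaceTransform_two_mul_le (hν : ∀ᵐ s ∂ν, 0 ≤ s) {w : ℝ} (hw : 0 ≤ w) (t : ℝ) :
    laplaceTransform ν (2 * w) ≤
      ν (Icc 0 t) + ENNReal.ofReal (Real.exp (-(w * t))) * laplaceTransform ν w := by
  simp only [laplaceTransform]
  rw [← lintegral_const_mul _ (by fun_prop), ← lintegral_indicator_one measurableSet_Icc,
    ← lintegral_add_left (measurable_one.indicator measurableSet_Icc)]
  refine lintegral_mono_ae ?_
  filter_upwards [hν] with s hs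
  obtain hst | hts := le_or_gt s t
  · rw [indicator_of_mem (show s ∈ Icc 0 t from ⟨hs, hst⟩)]
    refine le_add_right ?_
    rw [Pi.one_apply, ENNReal.ofReal_le_one, Real.exp_le_one_iff, neg_nonpos]
    positivity
  · refine le_add_left ?_
    rw [← ENNReal.ofReal_mul (Real.exp_nonneg _), ← Real.exp_add]
    refine ENNReal.ofReal_le_ofReal (Real.exp_le_exp.2 ?_)
    linarith [mul_le_mul_of_nonneg_left hts.le hw]

lemma tendsto_measure_Icc_div_laplaceTransform (hν : ∀ᵐ s ∂ν, 0 ≤ s)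
    (hslow : IsSlowlyVarying fun t ↦ laplaceTransform ν t⁻¹) {z : ℝ} (hz : 0 < z) :
    Tendsto (fun t ↦ ν (Icc 0 t) / laplaceTransform ν (z / t)) atTop (𝓝 1) := by
  have hratio (y : ℝ) (hy : 0 < y) :
      Tendsto (fun t ↦ laplaceTransform ν (y / t) / laplaceTransform ν (z / t)) atTop (𝓝 1) := by
    simpa only [mul_inv, inv_inv, ← div_eq_mul_inv] using
      hslow.tendsto_comp_mul_div_comp_mul (inv_pos.2 hy) (inv_pos.2 hz)
  refine tendsto_order.2 ⟨fun p hp ↦ ?_, fun p hp ↦ ?_⟩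
  · have hexp : Tendsto (fun y ↦ 1 - ENNReal.ofReal (Real.exp (-y))) atTop (𝓝 1) := by
      simpa using ENNReal.Tendsto.sub tendsto_const_nhds
        (ENNReal.tendsto_ofReal Real.tendsto_exp_neg_atTop_nhds_zero) (.inl ENNReal.one_ne_top)
    obtain ⟨y, hpy, hy⟩ := ((hexp.eventually_const_lt hp).and (eventually_gt_atTop 0)).exists
    have hlim := ENNReal.Tendsto.sub (hratio (2 * y) (by positivity))
      (ENNReal.Tendsto.const_mul (hratio y hy) (.inl one_ne_zero)
        (a := ENNReal.ofReal (Real.exp (-y)))) (.inl ENNReal.one_ne_top)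
    rw [mul_one] at hlim
    filter_upwards [hlim.eventually_const_lt hpy, eventually_gt_atTop 0] with t hlt ht
    refine hlt.trans_le (tsub_le_iff_right.2 ?_)
    rw [← mul_div_assoc, ENNReal.div_add_div_same]
    gcongr
    simpa only [mul_div_assoc, div_mul_cancel₀ y ht.ne'] using
      laplaceTransform_two_mul_le hν (div_pos hy ht).le t
  · have hexp : Tendsto (fun y ↦ ENNReal.ofReal (Real.exp y)) (𝓝[>] 0) (𝓝 1) := by
      simpa using (ENNReal.tendsto_ofReal (Real.continuous_exp.tendsto 0)).mono_left
        nhdsWithin_le_nhds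
    obtain ⟨y, hyp, hy⟩ := ((hexp.eventually_lt_const hp).and self_mem_nhdsWithin).exists
    have hlim := ENNReal.Tendsto.const_mul (hratio y hy) (.inl one_ne_zero)
      (a := ENNReal.ofReal (Real.exp y))
    rw [mul_one] at hlim
    filter_upwards [hlim.eventually_lt_const hyp, eventually_gt_atTop 0] with t hlt ht
    refine lt_of_le_of_lt ?_ hlt
    rw [← mul_div_assoc]
    gcongr
    simpa only [div_mul_cancel₀ y ht.ne'] using
      measure_Icc_le_exp_mul_laplaceTransform ν (div_pos hy ht).le t

theorem tendsto_laplaceTransform_div_measure_Icc (hν : ∀ᵐ s ∂ν, 0 ≤ s)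
    (hslow : IsSlowlyVarying fun t ↦ laplaceTransform ν t⁻¹) {z : ℝ} (hz : 0 < z) :
    Tendsto (fun t ↦ laplaceTransform ν (z / t) / ν (Icc 0 t)) atTop (𝓝 1) :=
  tendsto_div_one_swap (tendsto_measure_Icc_div_laplaceTransform hν hslow hz)

end Tauberian

section Renewal

variable {μs : ℕ → Measure ℝ}

lemma ae_nonneg_partialConv (hμs : ∀ i, ∀ᵐ x ∂μs i, 0 ≤ x) (n : ℕ) :
    ∀ᵐ x ∂partialConv μs n, 0 ≤ x := by
  induction n with
  | zero => exact (ae_dirac_iff measurableSet_Ici).2 le_rfl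
  | succ n ih =>
    rw [partialConv, Measure.conv, ae_map_iff (by fun_prop) measurableSet_Ici]
    filter_upwards [Measure.quasiMeasurePreserving_fst.ae ih,
      Measure.quasiMeasurePreserving_snd.ae (hμs (n + 1))] with p hfst hsnd
    exact add_nonneg hfst hsnd

lemma ae_nonneg_renewalMeasure (hμs : ∀ i, ∀ᵐ x ∂μs i, 0 ≤ x) :
    ∀ᵐ x ∂renewalMeasure μs, 0 ≤ x :=
  (Measure.ae_sum_iff' measurableSet_Ici).2 (ae_nonneg_partialConv hμs)

lemma renewalMeasure_eq_dirac_add_sum (μs : ℕ → Measure ℝ) :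
    renewalMeasure μs = Measure.dirac 0 + Measure.sum fun n ↦ partialConv μs (n + 1) := by
  ext s hs
  simp only [renewalMeasure, Measure.add_apply, Measure.sum_apply _ hs]
  exact tsum_eq_zero_add' (f := fun n ↦ partialConv μs n s) ENNReal.summable

lemma laplaceTransform_partialConv [∀ i, SFinite (μs i)] (n : ℕ) (w : ℝ) :
    laplaceTransform (partialConv μs n) w =
      ∏ i ∈ Finset.range n, laplaceTransform (μs (i + 1)) w := by
  induction n with
  | zero => simp [partialConv, laplaceTransform_dirac_zero]
  | succ n ih => rw [partialConv, laplaceTransform_conv, ih, Finset.prod_range_succ]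

lemma laplaceTransform_renewalMeasure [∀ i, SFinite (μs i)] (w : ℝ) :
    laplaceTransform (renewalMeasure μs) w =
      ∑' n, ∏ i ∈ Finset.range n, laplaceTransform (μs (i + 1)) w := by
  simp only [renewalMeasure, laplaceTransform_sum, laplaceTransform_partialConv]

lemma inv_one_sub_le_laplaceTransform_renewalMeasure [∀ i, SFinite (μs i)] {w : ℝ} {p : ℝ≥0∞}
    (hp : ∀ i, p ≤ laplaceTransform (μs i) w) :
    (1 - p)⁻¹ ≤ laplaceTransform (renewalMeasure μs) w := by
  rw [laplaceTransform_renewalMeasure, ← ENNReal.tsum_geometric]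
  refine ENNReal.tsum_le_tsum fun n ↦ ?_
  simpa using Finset.prod_le_prod' (s := Finset.range n) fun i _ ↦ hp (i + 1)

lemma laplaceTransform_renewalMeasure_le_inv_one_sub [∀ i, SFinite (μs i)] {w : ℝ} {q : ℝ≥0∞}
    (hq : ∀ i, laplaceTransform (μs i) w ≤ q) :
    laplaceTransform (renewalMeasure μs) w ≤ (1 - q)⁻¹ := by
  rw [laplaceTransform_renewalMeasure, ← ENNReal.tsum_geometric]
  refine ENNReal.tsum_le_tsum fun n ↦ ?_
  simpa using Finset.prod_le_prod' (s := Finset.range n) fun i _ ↦ hq (i + 1)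

theorem isSlowlyVarying_laplaceTransform_renewalMeasure_inv {μ : Measure ℝ}
    [IsProbabilityMeasure μ] (hμ : ∀ᵐ x ∂μ, 0 ≤ x) (hslow : IsSlowlyVarying fun t ↦ μ (Ioi t))
    {a b : ℝ} (ha : 0 < a) {lam : ℕ → ℝ} (hlam : ∀ i, lam i ∈ Icc a b) :
    IsSlowlyVarying fun t ↦
      laplaceTransform (renewalMeasure fun i ↦ μ.map (· / lam i)) t⁻¹ := by
  have hpos (i : ℕ) : 0 < lam i := ha.trans_le (hlam i).1
  have hb : 0 < b := (hpos 0).trans_le (hlam 0).2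
  refine (isSlowlyVarying_one_sub_laplaceTransform_inv hμ hslow).inv.of_le_of_le ha hb ?_ ?_
  · filter_upwards [eventually_gt_atTop 0] with t ht
    refine inv_one_sub_le_laplaceTransform_renewalMeasure fun i ↦ ?_
    rw [laplaceTransform_map_div, ← inv_mul_eq_div, ← mul_inv]
    have := (hlam i).1
    exact antitone_laplaceTransform hμ (by gcongr)
  · filter_upwards [eventually_gt_atTop 0] with t ht
    refine laplaceTransform_renewalMeasure_le_inv_one_sub fun i ↦ ?_
    rw [laplaceTransform_map_div, ← inv_mul_eq_div, ← mul_inv]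
    have := (hlam i).2
    have := hpos i
    exact antitone_laplaceTransform hμ (by gcongr)

end Renewal

lemma measure_Ioi_eq_ofReal_one_sub {μ : Measure ℝ} [IsProbabilityMeasure μ]
    (hμ : μ (Iic 0) = 0) (t : ℝ) :
    μ (Ioi t) = ENNReal.ofReal (1 - (μ (Ioc 0 t)).toReal) := by
  have hIoc : μ (Ioc 0 t) = μ (Iic t) := by
    rw [← Ioi_inter_Iic, ← compl_Iic, inter_comm, ← sdiff_eq, measure_sdiff_null hμ]
  rw [hIoc, ← measureReal_def, ← probReal_compl_eq_one_sub measurableSet_Iic, compl_Iic,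
    ofReal_measureReal]

/-- **Normalized renewal measures concentrate at `0`.** For the renewal
measure `ν_Λ = δ_0 + Σ_{n≥1} μ_1 * ⋯ * μ_n` of a scaled renewal process whose
common waiting-time tail `1 - F` is positive and slowly varying, one has, for
every `z > 0`, `(∫_{[0,∞)} e^{-z·s/t} dν_Λ(s)) / U_Λ(t) → 1` as `t → ∞`,
i.e. the normalized measures `B ↦ ν_Λ(t·B)/U_Λ(t)` converge to the point mass
at `0` in the sense of Laplace transforms. -/
theorem normalized_renewal_measure_tendsto_dirac
    (μ : Measure ℝ) [IsProbabilityMeasure μ]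
    (hsupp : μ (Set.Iic (0 : ℝ)) = 0)
    (F : ℝ → ℝ) (hF : ∀ t, F t = (μ (Set.Ioc (0 : ℝ) t)).toReal)
    (hFtail : ∀ t : ℝ, 0 < 1 - F t)
    (hFslow : ∀ c : ℝ, 0 < c →
      Tendsto (fun t : ℝ => (1 - F (c * t)) / (1 - F t)) atTop (𝓝 1))
    (a b : ℝ) (ha : 0 < a) (hab : a < b)
    (lam : ℕ → ℝ) (hlam : ∀ i, lam i ∈ Set.Icc a b)
    (μs : ℕ → Measure ℝ)
    (hμs : ∀ i, μs i = Measure.map (fun x : ℝ => x / lam i) μ)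
    (ν : Measure ℝ)
    (hν : ν = Measure.dirac 0 + Measure.sum (fun n : ℕ => partialConv μs (n + 1)))
    (U : ℝ → ℝ≥0∞) (hU : ∀ t, U t = ν (Set.Icc 0 t)) :
    ∀ z : ℝ, 0 < z →
      Tendsto (fun t : ℝ =>
          (∫⁻ s in Set.Ici (0 : ℝ), ENNReal.ofReal (Real.exp (-z * s / t)) ∂ν) / U t)
        atTop (𝓝 1) := by
  intro z hz
  have hμ : ∀ᵐ x ∂μ, 0 ≤ x :=
    (measure_eq_zero_iff_ae_notMem.1 hsupp).mono fun x hx ↦ (not_le.1 hx).le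
  have htail : IsSlowlyVarying fun t ↦ μ (Ioi t) := by
    simpa only [measure_Ioi_eq_ofReal_one_sub hsupp, ← hF] using
      isSlowlyVarying_ofReal hFtail hFslow
  obtain rfl : μs = fun i ↦ μ.map (· / lam i) := funext hμs
  rw [← renewalMeasure_eq_dirac_add_sum] at hν
  have hν_nonneg : ∀ᵐ s ∂ν, 0 ≤ s := hν ▸
    ae_nonneg_renewalMeasure fun i ↦ ae_nonneg_map_div hμ (ha.le.trans (hlam i).1)
  have hν_slow : IsSlowlyVarying fun t ↦ laplaceTransform ν t⁻¹ := hν ▸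
    isSlowlyVarying_laplaceTransform_renewalMeasure_inv hμ htail ha hlam
  refine (tendsto_laplaceTransform_div_measure_Icc hν_nonneg hν_slow hz).congr fun t ↦ ?_
  rw [hU, Measure.restrict_eq_self_of_ae_mem (s := Ici 0) hν_nonneg]
  simp only [laplaceTransform, neg_mul, neg_div, div_mul_eq_mul_div]
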